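/- arXiv:2502.09091 — 2 statements merged into one kernel-verified Lean document; each statement's English description precedes it below -/
import Mathlib

section
/- Let m be an integer, a, b complex numbers, and σ₀ > 0, and set φ(s) = (s−1)^m e^{as+b}. If φ(s) → 1 as s → ∞ within the sector Ω = {s ∈ ℂ : Re s > σ₀ and |Im s| ≤ Re s}, then m = 0, a = 0, and e^b = 1; in particular φ ≡ 1. -/
open Complex Filter

/-!
Only the values on the positive real axis matter. For fixed real `t`, the quotient
`φ(x + t) / φ(x)` tends to `1` by hypothesis, while its factor `((x + t - p) / (x - p)) ^ m` also
tends to `1`; what is left is the constant `e^{at}`, so `e^{at} = 1` for all `t`, and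
differentiating at `t = 0` gives `a = 0`. Then `(x - p) ^ m` has a finite nonzero limit, which
forces `m = 0`.
-/

open Bornology Topology

theorem eq_zero_of_forall_exp_smul_eq_one (𝕂 : Type*) {𝔸 : Type*} [RCLike 𝕂] [NormedRing 𝔸]
    [NormedAlgebra 𝕂 𝔸] [CompleteSpace 𝔸] {x : 𝔸}
    (h : ∀ t : 𝕂, NormedSpace.exp (t • x) = 1) : x = 0 := by
  have hderiv : HasDerivAt (fun t : 𝕂 => NormedSpace.exp (t • x)) x 0 := by
    simpa only [h, one_mul] using hasDerivAt_exp_smul_const (𝕂 := 𝕂) x 0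
  simp only [h] at hderiv
  exact hderiv.unique (hasDerivAt_const 0 1)

section Cobounded

variable {α K : Type*} [NormedDivisionRing K] {l : Filter α} {f : α → K}

theorem tendsto_add_const_div_self_of_cobounded (hf : Tendsto f l (cobounded K)) (t : K) :
    Tendsto (fun x => (f x + t) / f x) l (𝓝 1) := by
  have hinv : Tendsto (fun x => 1 + t * (f x)⁻¹) l (𝓝 1) := by
    simpa using ((tendsto_inv₀_cobounded.comp hf).const_mul t).const_add 1
  refine hinv.congr' ?_
  filter_upwards [hf.eventually_ne_cobounded 0] with x hx
  rw [add_div, div_self hx, div_eq_mul_inv]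

theorem eq_zero_of_tendsto_zpow_of_cobounded [l.NeBot] (hf : Tendsto f l (cobounded K)) {m : ℤ}
    {c : K} (hc : c ≠ 0) (h : Tendsto (fun x => f x ^ m) l (𝓝 c)) : m = 0 := by
  have hnorm : Tendsto (fun x => ‖f x‖) l atTop := tendsto_norm_atTop_iff_cobounded.2 hf
  have hpow : Tendsto (fun x => ‖f x‖ ^ m) l (𝓝 ‖c‖) := by simpa only [norm_zpow] using h.norm
  rcases lt_trichotomy m 0 with hm | hm | hm
  · have hzero := (tendsto_zpow_atTop_zero hm).comp hnorm
    exact absurd (tendsto_nhds_unique hpow hzero) (norm_ne_zero_iff.2 hc)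
  · exact hm
  · exact absurd ((tendsto_zpow_atTop_atTop hm).comp hnorm) (not_tendsto_atTop_of_tendsto_nhds hpow)

end Cobounded

theorem tendsto_ofReal_sub_const_atTop_cobounded {𝕂 : Type*} [RCLike 𝕂] (p : 𝕂) :
    Tendsto (fun x : ℝ => (x : 𝕂) - p) atTop (cobounded 𝕂) :=
  (tendsto_sub_const_cobounded p).comp (RCLike.tendsto_ofReal_atTop_cobounded 𝕂)

theorem exp_mul_ofReal_eq_one_of_tendsto {m : ℤ} {a b p c : ℂ} (hc : c ≠ 0)
    (hlim : Tendsto (fun x : ℝ => ((x : ℂ) - p) ^ m * exp (a * x + b)) atTop (𝓝 c)) (t : ℝ) :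
    exp (a * t) = 1 := by
  have hsub := tendsto_ofReal_sub_const_atTop_cobounded p
  set f : ℝ → ℂ := fun x => ((x : ℂ) - p) ^ m * exp (a * x + b) with hf
  have hone : Tendsto (fun x => f (x + t) / f x) atTop (𝓝 1) := by
    simpa only [div_self hc] using!
      (hlim.comp (tendsto_atTop_add_const_right _ t tendsto_id)).div hlim hc
  have hexp : Tendsto (fun x : ℝ => (((x : ℂ) - p + t) / (x - p)) ^ m * exp (a * t)) atTop
      (𝓝 (exp (a * t))) := by
    simpa using ((tendsto_add_const_div_self_of_cobounded hsub (t : ℂ)).zpow₀ m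
      (.inl one_ne_zero)).mul_const (exp (a * t))
  have hquot (x : ℝ) : f (x + t) / f x = (((x : ℂ) - p + t) / (x - p)) ^ m * exp (a * t) := by
    have hshift : a * ((x + t : ℝ) : ℂ) + b = a * x + b + a * t := by push_cast; ring
    have hbase : ((x + t : ℝ) : ℂ) - p = x - p + t := by push_cast; ring
    simp only [hf]
    rw [hshift, hbase, exp_add _ (a * t), mul_div_mul_comm, div_zpow,
      mul_div_cancel_left₀ _ (exp_ne_zero _)]
  exact tendsto_nhds_unique hexp (hone.congr hquot)

theorem tendsto_ofReal_of_tendsto_in_sector {E : Type*} [SeminormedAddCommGroup E] {f : ℂ → E}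
    {c : E} {σ₀ : ℝ}
    (hlim : ∀ ε : ℝ, 0 < ε → ∃ R : ℝ, 0 < R ∧ ∀ s : ℂ,
      σ₀ < s.re → |s.im| ≤ s.re → R < ‖s‖ → ‖f s - c‖ < ε) :
    Tendsto (fun x : ℝ => f x) atTop (𝓝 c) := by
  refine Metric.tendsto_nhds.2 fun ε hε => ?_
  obtain ⟨R, hR, h⟩ := hlim ε hε
  filter_upwards [eventually_gt_atTop σ₀, eventually_gt_atTop R] with x hσ hx
  have hx₀ : 0 ≤ x := (hR.trans hx).le
  rw [dist_eq_norm]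
  exact h x (by simpa using hσ) (by simpa using hx₀) (by rwa [norm_real, Real.norm_of_nonneg hx₀])

theorem phi_tendsto_one_in_sector_general (m : ℤ) (a b p : ℂ) {c : ℂ} (hc : c ≠ 0)
    (φ : ℂ → ℂ) (hφ : ∀ s : ℂ, φ s = (s - p) ^ m * exp (a * s + b))
    (hlim : Tendsto (fun x : ℝ => φ x) atTop (𝓝 c)) :
    m = 0 ∧ a = 0 ∧ exp b = c ∧ ∀ s : ℂ, φ s = c := by
  obtain rfl : a = 0 := by
    simp only [hφ] at hlim
    refine eq_zero_of_forall_exp_smul_eq_one ℝ fun t => ?_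
    rw [← exp_eq_exp_ℂ, real_smul, mul_comm]
    exact exp_mul_ofReal_eq_one_of_tendsto hc hlim t
  simp only [zero_mul, zero_add] at hφ
  obtain rfl : m = 0 := by
    refine eq_zero_of_tendsto_zpow_of_cobounded (tendsto_ofReal_sub_const_atTop_cobounded p)
      (div_ne_zero hc (exp_ne_zero b)) ?_
    simpa [hφ] using hlim.div_const (exp b)
  simp only [zpow_zero, one_mul] at hφ
  have hb : exp b = c := by
    simp only [hφ] at hlim
    exact tendsto_nhds_unique tendsto_const_nhds hlim
  exact ⟨rfl, rfl, hb, fun s => (hφ s).trans hb⟩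

/-- If `φ(s) = (s−1)^m e^{as+b}` tends to `1` as `s → ∞` inside the sector
`Ω = {s : Re s > σ₀, |Im s| ≤ Re s}`, then `m = 0`, `a = 0` and `e^b = 1`;
in particular `φ ≡ 1`. -/
theorem phi_tendsto_one_in_sector
    (m : ℤ) (a b : ℂ) (σ₀ : ℝ) (hσ₀ : 0 < σ₀)
    (φ : ℂ → ℂ) (hφ : ∀ s : ℂ, φ s = (s - 1) ^ m * Complex.exp (a * s + b))
    (hlim : ∀ ε : ℝ, 0 < ε → ∃ R : ℝ, 0 < R ∧ ∀ s : ℂ,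
      σ₀ < s.re → |s.im| ≤ s.re → R < ‖s‖ → ‖φ s - 1‖ < ε) :
    m = 0 ∧ a = 0 ∧ Complex.exp b = 1 ∧ ∀ s : ℂ, φ s = 1 :=
  phi_tendsto_one_in_sector_general m a b 1 one_ne_zero φ hφ
    (tendsto_ofReal_of_tendsto_in_sector hlim)
end

section
/- Let m be an integer, b ∈ ℂ, and a ∈ ℂ with a ≠ 0, and set φ(s) = (s−1)^m e^{as+b}. If θ ∈ [0, 2π) is a 1-value limiting direction of φ, i.e. there exists an unbounded sequence (s_n) with arg s_n → θ and φ(s_n) → 1, then Re(a e^{iθ}) = 0. In particular, φ has at most two 1-value limiting directions. -/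
/-!
Taking `log ‖·‖` in `φ(s) = R(s) e^{as+b}` gives `Re (a s) = log ‖φ(s)‖ - log ‖R(s)‖ - Re b`
wherever `φ(s) ≠ 0`. Along a sequence `s → ∞` on which `φ` tends to a nonzero value, the right-hand
side is `o(‖s‖)` as soon as `log ‖R(s)‖ = o(‖s‖)`, which holds for `R(s) = (s - 1)^m`; dividing by
`‖s‖` and passing to the limit yields `Re (a e^{iθ}) = 0`. The points `a e^{iθ}` then lie on both
the imaginary axis and the circle of radius `‖a‖`, which meet in at most two points.
-/

open Complex Filter

/-- `θ ∈ [0, 2π)` is a `c`-value limiting direction of `f`: there is a sequence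
`(sₙ)` with `|sₙ| → ∞`, `arg sₙ → θ` and `f sₙ → c`. -/
def IsValueLimitingDirection (f : ℂ → ℂ) (c : ℂ) (θ : ℝ) : Prop :=
  ∃ s : ℕ → ℂ, Filter.Tendsto (fun n => ‖s n‖) Filter.atTop Filter.atTop ∧
    Filter.Tendsto (fun n => s n / (‖s n‖ : ℂ)) Filter.atTop
      (nhds (Complex.exp (θ * Complex.I))) ∧
    Filter.Tendsto (fun n => f (s n)) Filter.atTop (nhds c)

open Asymptotics Bornology Topology

section Growth

variable {E : Type*} [NormedAddCommGroup E]

lemma isLittleO_log_norm_sub_const_cobounded (z : E) :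
    (fun s : E => Real.log ‖s - z‖) =o[cobounded E] fun s => ‖s‖ := by
  have log_isLittleO : (fun s : E => Real.log ‖s - z‖) =o[cobounded E] fun s => ‖s - z‖ :=
    Real.isLittleO_log_id_atTop.comp_tendsto
      (tendsto_norm_cobounded_atTop.comp (tendsto_sub_const_cobounded z))
  have sub_isBigO : (fun s : E => s - z) =O[cobounded E] fun s => s :=
    (isBigO_refl _ _).sub (isLittleO_const_id_cobounded z).isBigO
  exact log_isLittleO.trans_isBigO sub_isBigO.norm_norm

lemma isLittleO_log_norm_zpow_sub_const_cobounded {K : Type*} [NormedField K] (m : ℤ) (z : K) :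
    (fun s : K => Real.log ‖(s - z) ^ m‖) =o[cobounded K] fun s => ‖s‖ := by
  simpa only [norm_zpow, Real.log_zpow] using
    (isLittleO_log_norm_sub_const_cobounded z).const_mul_left (m : ℝ)

lemma isLittleO_log_norm_of_tendsto {α : Type*} {l : Filter α} {f : α → E} {g : α → ℝ} {c : E}
    (hf : Tendsto f l (𝓝 c)) (hc : c ≠ 0) (hg : Tendsto g l atTop) :
    (fun x => Real.log ‖f x‖) =o[l] g :=
  ((hf.norm.log (norm_ne_zero_iff.2 hc)).isBigO_one ℝ).trans_isLittleO
    ((isLittleO_one_left_iff ℝ).2 (tendsto_norm_atTop_atTop.comp hg))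

end Growth

lemma log_norm_mul_exp {w : ℂ} (hw : w ≠ 0) (z : ℂ) :
    Real.log ‖w * exp z‖ = Real.log ‖w‖ + z.re := by
  rw [norm_mul, norm_exp, Real.log_mul (norm_ne_zero_iff.2 hw) (Real.exp_ne_zero _), Real.log_exp]

lemma re_mul_eq_zero_of_isLittleO {α : Type*} {l : Filter α} [l.NeBot] {s : α → ℂ} {a u : ℂ}
    (hu : Tendsto (fun n => s n / (‖s n‖ : ℂ)) l (𝓝 u))
    (h : (fun n => (a * s n).re) =o[l] fun n => ‖s n‖) : (a * u).re = 0 := by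
  have re_tendsto : Tendsto (fun n => (a * (s n / (‖s n‖ : ℂ))).re) l (𝓝 (a * u).re) :=
    (continuous_re.tendsto _).comp (hu.const_mul a)
  simp only [← mul_div_assoc, div_ofReal_re] at re_tendsto
  exact tendsto_nhds_unique re_tendsto h.tendsto_div_nhds_zero

theorem IsValueLimitingDirection.re_mul_exp_eq_zero {R φ : ℂ → ℂ} {a b c : ℂ} {θ : ℝ}
    (hR : (fun s => Real.log ‖R s‖) =o[cobounded ℂ] fun s => ‖s‖)
    (hφ : ∀ s, φ s = R s * exp (a * s + b)) (hc : c ≠ 0)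
    (h : IsValueLimitingDirection φ c θ) : (a * exp (θ * I)).re = 0 := by
  obtain ⟨s, norm_tendsto, dir_tendsto, value_tendsto⟩ := h
  refine re_mul_eq_zero_of_isLittleO dir_tendsto ?_
  have log_φ_isLittleO : (fun n => Real.log ‖φ (s n)‖) =o[atTop] fun n => ‖s n‖ :=
    isLittleO_log_norm_of_tendsto value_tendsto hc norm_tendsto
  have log_R_isLittleO : (fun n => Real.log ‖R (s n)‖) =o[atTop] fun n => ‖s n‖ :=
    hR.comp_tendsto (tendsto_norm_atTop_iff_cobounded.1 norm_tendsto)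
  have const_isLittleO : (fun _ => b.re) =o[atTop] fun n => ‖s n‖ :=
    isLittleO_const_left.2 (.inr (tendsto_norm_atTop_atTop.comp norm_tendsto))
  refine ((log_φ_isLittleO.sub log_R_isLittleO).sub const_isLittleO).congr' ?_ .rfl
  filter_upwards [value_tendsto.eventually_ne hc] with n hn
  have R_ne_zero : R (s n) ≠ 0 := left_ne_zero_of_mul (hφ (s n) ▸ hn)
  rw [hφ, log_norm_mul_exp R_ne_zero, add_re]
  ring

lemma encard_norm_eq_re_eq_zero_le_two (r : ℝ) : {w : ℂ | ‖w‖ = r ∧ w.re = 0}.encard ≤ 2 := by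
  have subset_pair : {w : ℂ | ‖w‖ = r ∧ w.re = 0} ⊆ {r * I, -(r * I)} := by
    rintro w ⟨norm_eq, re_eq⟩
    have abs_im : |w.im| = r := (abs_im_eq_norm.2 re_eq).trans norm_eq
    rcases eq_or_eq_neg_of_abs_eq abs_im with im_eq | im_eq
    · exact .inl (Complex.ext (by simp [re_eq]) (by simp [im_eq]))
    · exact .inr (Complex.ext (by simp [re_eq]) (by simp [im_eq]))
  calc {w : ℂ | ‖w‖ = r ∧ w.re = 0}.encard
      ≤ ({r * I, -(r * I)} : Set ℂ).encard := Set.encard_le_encard subset_pair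
    _ ≤ ({-(r * I)} : Set ℂ).encard + 1 := Set.encard_insert_le _ _
    _ = 2 := by rw [Set.encard_singleton, one_add_one_eq_two]

lemma injOn_mul_exp_mul_I {a : ℂ} (ha : a ≠ 0) {x y : ℝ} (hxy : y - x ≤ 2 * Real.pi) :
    Set.InjOn (fun θ : ℝ => a * exp (θ * I)) (Set.Ico x y) :=
  ((mul_right_injective₀ ha).comp Subtype.val_injective).comp_injOn (Circle.exp_injOn_Ico hxy)

lemma encard_re_mul_exp_eq_zero_le_two {a : ℂ} (ha : a ≠ 0) {x y : ℝ}
    (hxy : y - x ≤ 2 * Real.pi) :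
    {θ ∈ Set.Ico x y | (a * exp ((θ : ℝ) * I)).re = 0}.encard ≤ 2 := by
  have maps_to : Set.MapsTo (fun θ : ℝ => a * exp (θ * I))
      {θ ∈ Set.Ico x y | (a * exp ((θ : ℝ) * I)).re = 0} {w | ‖w‖ = ‖a‖ ∧ w.re = 0} :=
    fun θ hθ => ⟨by rw [norm_mul, norm_exp_ofReal_mul_I, mul_one], hθ.2⟩
  exact (Set.encard_le_encard_of_injOn maps_to
    ((injOn_mul_exp_mul_I ha hxy).mono (Set.sep_subset _ _))).trans
      (encard_norm_eq_re_eq_zero_le_two ‖a‖)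

theorem one_value_limiting_directions_of_phi_general {R φ : ℂ → ℂ} {a b c : ℂ} (ha : a ≠ 0)
    (hR : (fun s => Real.log ‖R s‖) =o[cobounded ℂ] fun s => ‖s‖)
    (hφ : ∀ s, φ s = R s * exp (a * s + b)) (hc : c ≠ 0) :
    (∀ θ : ℝ, IsValueLimitingDirection φ c θ → (a * exp (θ * I)).re = 0) ∧
    {θ ∈ Set.Ico 0 (2 * Real.pi) | IsValueLimitingDirection φ c θ}.encard ≤ 2 := by
  have re_eq_zero (θ : ℝ) (h : IsValueLimitingDirection φ c θ) : (a * exp (θ * I)).re = 0 :=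
    h.re_mul_exp_eq_zero hR hφ hc
  have subset : {θ ∈ Set.Ico 0 (2 * Real.pi) | IsValueLimitingDirection φ c θ} ⊆
      {θ ∈ Set.Ico 0 (2 * Real.pi) | (a * exp ((θ : ℝ) * I)).re = 0} :=
    fun θ hθ => ⟨hθ.1, re_eq_zero θ hθ.2⟩
  exact ⟨re_eq_zero, (Set.encard_le_encard subset).trans
    (encard_re_mul_exp_eq_zero_le_two ha (sub_zero _).le)⟩

/-- If `φ(s) = (s−1)^m e^{as+b}` with `a ≠ 0` and `θ ∈ [0, 2π)` is a `1`-value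
limiting direction of `φ`, then `Re (a e^{iθ}) = 0`. In particular, `φ` has at most
two `1`-value limiting directions in `[0, 2π)`. -/
theorem one_value_limiting_directions_of_phi
    (m : ℤ) (a b : ℂ) (ha : a ≠ 0)
    (φ : ℂ → ℂ) (hφ : ∀ s : ℂ, φ s = (s - 1) ^ m * Complex.exp (a * s + b)) :
    (∀ θ : ℝ, θ ∈ Set.Ico 0 (2 * Real.pi) →
      IsValueLimitingDirection φ 1 θ → (a * Complex.exp (θ * Complex.I)).re = 0) ∧
    ({θ ∈ Set.Ico 0 (2 * Real.pi) | IsValueLimitingDirection φ 1 θ}.encard ≤ 2) := by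
  obtain ⟨re_eq_zero, encard_le⟩ := one_value_limiting_directions_of_phi_general ha
    (isLittleO_log_norm_zpow_sub_const_cobounded m 1) hφ one_ne_zero
  exact ⟨fun θ _ => re_eq_zero θ, encard_le⟩
end
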